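/- Let N, K be positive integers with K ≥ N. Define v[n] = 1/√N for 0 ≤ n ≤ N−1 and v[n] = 0 otherwise, and w[n] = 1/√N for 1−K ≤ n ≤ 0 and w[n] = 0 otherwise. Then for every integer x with 0 ≤ x ≤ K−N and every integer y: A_{v,w}(x,y) = 0 whenever y is not a multiple of N, and A_{v,w}(x,y) = 1 whenever y is a multiple of N. -/

import Mathlib

/-!
Since `0 ≤ x ≤ K - N`, the shifted window `n ↦ v[n-x]` is supported in `[x, x+N-1] ⊆ [0, K-1]`,
where `w[-n]` is constantly `1/√N`. Hence, with `n = x + k` and `ζ = exp(2πiy/N)`, the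
crossambiguity function is `exp(2πiyx/N) · (1/N) · ∑_{k<N} ζ^k` (`crossamb_eq_geom`). As
`ζ^N = 1`, the geometric sum vanishes unless `ζ = 1`, which happens exactly when `N ∣ y`.
-/

open Complex

/-- The crossambiguity function
`A_{v,w}(x,y) = ∑_{n∈ℤ} v[n−x]·w[−n]·exp(2πi y n/N)`. -/
noncomputable def crossamb (N : ℕ) (v w : ℤ → ℂ) (x y : ℤ) : ℂ :=
  ∑' n : ℤ, v (n - x) * w (-n) * Complex.exp (2 * Real.pi * Complex.I * (y : ℂ) * (n : ℂ) / N)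

lemma crossamb_eq_geom
    (N K : ℕ) (v : ℤ → ℂ)
    (hv : ∀ n : ℤ, v n = if 0 ≤ n ∧ n ≤ (N : ℤ) - 1 then ((1 / Real.sqrt N : ℝ) : ℂ) else 0)
    (w : ℤ → ℂ)
    (hw : ∀ n : ℤ, w n = if 1 - (K : ℤ) ≤ n ∧ n ≤ 0 then ((1 / Real.sqrt N : ℝ) : ℂ) else 0)
    (x y : ℤ) (hx : 0 ≤ x) (hxK : x ≤ (K : ℤ) - N) :
    crossamb N v w x y = Complex.exp (2 * Real.pi * Complex.I * y / N) ^ x * (1 / N) *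
      ∑ k ∈ Finset.range N, Complex.exp (2 * Real.pi * Complex.I * y / N) ^ k := by
  unfold crossamb
  rw [tsum_eq_sum (s := (Finset.range N).image (fun k : ℕ => x + (k : ℤ)))]
  · rw [Finset.sum_image (by intro a _ b _ h; simpa using h), Finset.mul_sum]
    refine Finset.sum_congr rfl fun k hk => ?_
    have hk' := Finset.mem_range.mp hk
    rw [hv, hw, if_pos (by omega), if_pos (by omega), ← Complex.ofReal_mul]
    have hsq : (1 / Real.sqrt N) * (1 / Real.sqrt N) = 1 / (N : ℝ) := by
      rw [div_mul_div_comm, Real.mul_self_sqrt (Nat.cast_nonneg N), one_mul]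
    have hexp : Complex.exp (2 * Real.pi * Complex.I * (y : ℂ) * ((x + (k : ℤ) : ℤ) : ℂ) / N) =
        Complex.exp (2 * Real.pi * Complex.I * y / N) ^ x *
          Complex.exp (2 * Real.pi * Complex.I * y / N) ^ k := by
      rw [← Complex.exp_int_mul, ← Complex.exp_nat_mul, ← Complex.exp_add]
      congr 1
      push_cast
      ring
    rw [hsq, hexp]
    push_cast
    ring
  · intro n hn
    rw [hv, if_neg, zero_mul, zero_mul]
    rintro ⟨h0, h1⟩
    exact hn (Finset.mem_image.mpr ⟨(n - x).toNat, Finset.mem_range.mpr (by omega), by omega⟩)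

lemma exp_eq_one_iff_dvd (N : ℕ) (hN : 0 < N) (y : ℤ) :
    Complex.exp (2 * Real.pi * Complex.I * y / N) = 1 ↔ (N : ℤ) ∣ y := by
  have hNC : (N : ℂ) ≠ 0 := by exact_mod_cast hN.ne'
  rw [Complex.exp_eq_one_iff]
  refine exists_congr fun m => ?_
  rw [div_eq_iff hNC,
    show (m : ℂ) * (2 * Real.pi * Complex.I) * N = 2 * Real.pi * Complex.I * (N * m) by ring,
    mul_right_inj' Complex.two_pi_I_ne_zero]
  norm_cast

/-- For the zero-padding scheme, with `v[n] = 1/√N` for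
`0 ≤ n ≤ N−1` (`0` otherwise) and `w[n] = 1/√N` for `1−K ≤ n ≤ 0`
(`0` otherwise), for every integer `x` with `0 ≤ x ≤ K−N` and every integer `y`:
`A_{v,w}(x,y) = 0` whenever `y` is not a multiple of `N`, and
`A_{v,w}(x,y) = 1` whenever `y` is a multiple of `N`. -/
theorem stmt13
    (N K : ℕ) (hN : 0 < N) (hNK : N ≤ K)
    (v : ℤ → ℂ)
    (hv : ∀ n : ℤ, v n = if 0 ≤ n ∧ n ≤ (N : ℤ) - 1 then ((1 / Real.sqrt N : ℝ) : ℂ) else 0)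
    (w : ℤ → ℂ)
    (hw : ∀ n : ℤ, w n = if 1 - (K : ℤ) ≤ n ∧ n ≤ 0 then ((1 / Real.sqrt N : ℝ) : ℂ) else 0) :
    ∀ x y : ℤ, 0 ≤ x → x ≤ (K : ℤ) - N →
      (¬ (N : ℤ) ∣ y → crossamb N v w x y = 0) ∧
        ((N : ℤ) ∣ y → crossamb N v w x y = 1) := by
  intro x y hx hxK
  rw [crossamb_eq_geom N K v hv w hw x y hx hxK]
  have hNC : (N : ℂ) ≠ 0 := by exact_mod_cast hN.ne'
  refine ⟨fun hy => ?_, fun hy => ?_⟩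
  · have hne := mt (exp_eq_one_iff_dvd N hN y).mp hy
    have hpow : Complex.exp (2 * Real.pi * Complex.I * y / N) ^ N = 1 := by
      rw [← Complex.exp_nat_mul, mul_div_cancel₀ _ hNC, Complex.exp_eq_one_iff]
      exact ⟨y, by ring⟩
    rw [geom_sum_eq hne, hpow, sub_self, zero_div, mul_zero]
  · rw [(exp_eq_one_iff_dvd N hN y).mpr hy]
    simp [hNC]
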